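/- arXiv:1208.1685 — 4 statements merged into one kernel-verified Lean document; each statement's English description precedes it below -/
import Mathlib

section
/- (Symmetry and nonnegativity of the discrete flux-to-pressure operator.) Let φ, ψ ∈ Φ, let (u_φ, p_φ) and (u_ψ, p_ψ) be discrete Darcy solutions for φ and ψ respectively, and let t_φ, t_ψ ∈ Φ satisfy ⟨t_φ, N v⟩ = a(u_φ, v) − b(v, p_φ) and ⟨t_ψ, N v⟩ = a(u_ψ, v) − b(v, p_ψ) for all v ∈ V. Then ⟨t_φ, ψ⟩ = ⟨t_ψ, φ⟩, and ⟨t_φ, φ⟩ ≥ 0. -/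
open RealInnerProductSpace

/-- Symmetry and nonnegativity of the discrete flux-to-pressure operator:
`⟪tφ, ψ⟫ = ⟪tψ, φ⟫` and `⟪tφ, φ⟫ ≥ 0`. -/
theorem discrete_FtP_symm_nonneg
    {V Q Φ : Type*}
    [NormedAddCommGroup V] [InnerProductSpace ℝ V] [FiniteDimensional ℝ V]
    [NormedAddCommGroup Q] [InnerProductSpace ℝ Q] [FiniteDimensional ℝ Q]
    [NormedAddCommGroup Φ] [InnerProductSpace ℝ Φ] [FiniteDimensional ℝ Φ]
    (a : V →ₗ[ℝ] V →ₗ[ℝ] ℝ) (ha_symm : ∀ u v, a u v = a v u)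
    (ha_pos : ∀ v, 0 ≤ a v v)
    (b : V →ₗ[ℝ] Q →ₗ[ℝ] ℝ)
    (N : V →ₗ[ℝ] Φ) (hN : Function.Surjective N)
    (φ ψ : Φ) (uφ : V) (pφ : Q) (uψ : V) (pψ : Q)
    (huφ : N uφ = φ)
    (hkerφ : ∀ v, N v = 0 → a uφ v - b v pφ = 0)
    (hdivφ : ∀ q, b uφ q = 0)
    (huψ : N uψ = ψ)
    (hkerψ : ∀ v, N v = 0 → a uψ v - b v pψ = 0)
    (hdivψ : ∀ q, b uψ q = 0)
    (tφ : Φ) (htφ : ∀ v, ⟪tφ, N v⟫ = a uφ v - b v pφ)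
    (tψ : Φ) (htψ : ∀ v, ⟪tψ, N v⟫ = a uψ v - b v pψ) :
    ⟪tφ, ψ⟫ = ⟪tψ, φ⟫ ∧ 0 ≤ ⟪tφ, φ⟫ := by
  -- Testing with the discretely divergence-free velocities `uψ`, `uφ` removes the pressure
  -- terms, so both pairings become values of `a`: `⟪tφ, ψ⟫ = a uφ uψ`, `⟪tφ, φ⟫ = a uφ uφ`.
  constructor
  · rw [← huψ, ← huφ, htφ, htψ, hdivψ, hdivφ, ha_symm]
  · rw [← huφ, htφ, hdivφ, sub_zero]
    exact ha_pos uφ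
end

section
/- (Reduced formulation implies coupled formulation.) Let (u^f, p^f) be a source Darcy solution and let γ ∈ W satisfy ⟨γ, N_D v⟩ = a_D(u^f, v) − b_D(v, p^f) for all v ∈ V_D. Let u_S ∈ V_S, set φ := R(N_S u_S), let (u^φ, p^φ) be a flux Darcy solution for φ, and let t ∈ W satisfy ⟨t, N_D v⟩ = a_D(u^φ, v) − b_D(v, p^φ) for all v ∈ V_D. Suppose (u_S, p_S) ∈ V_S × Q_S satisfies the reduced problem: a_S(u_S, v) + ⟨t, R(N_S v)⟩ − b_S(v, p_S) = F(v) − ⟨γ, R(N_S v)⟩ for all v ∈ V_S, and b_S(u_S, q) = 0 for all q ∈ Q_S. Then ((u_S, u^f + u^φ), (p_S, p^f + p^φ)) solves the coupled problem. -/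
open RealInnerProductSpace

section StokesDarcy

variable {VS QS VD QD W : Type*}
  [NormedAddCommGroup VS] [InnerProductSpace ℝ VS] [FiniteDimensional ℝ VS]
  [NormedAddCommGroup QS] [InnerProductSpace ℝ QS] [FiniteDimensional ℝ QS]
  [NormedAddCommGroup VD] [InnerProductSpace ℝ VD] [FiniteDimensional ℝ VD]
  [NormedAddCommGroup QD] [InnerProductSpace ℝ QD] [FiniteDimensional ℝ QD]
  [NormedAddCommGroup W] [InnerProductSpace ℝ W] [FiniteDimensional ℝ W]

/-- The coupled Stokes–Darcy problem. -/
def IsCoupledSolution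
    (NS : VS →ₗ[ℝ] W) (ND : VD →ₗ[ℝ] W) (R : W →ₗ[ℝ] W)
    (aS : VS →ₗ[ℝ] VS →ₗ[ℝ] ℝ) (aD : VD →ₗ[ℝ] VD →ₗ[ℝ] ℝ)
    (bS : VS →ₗ[ℝ] QS →ₗ[ℝ] ℝ) (bD : VD →ₗ[ℝ] QD →ₗ[ℝ] ℝ)
    (F : VS →ₗ[ℝ] ℝ) (G : QD →ₗ[ℝ] ℝ)
    (uS : VS) (uD : VD) (pS : QS) (pD : QD) : Prop :=
  ND uD = R (NS uS) ∧
  (∀ (vS : VS) (vD : VD), ND vD = R (NS vS) →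
    aS uS vS + aD uD vD - bS vS pS - bD vD pD = F vS) ∧
  (∀ (qS : QS) (qD : QD), bS uS qS + bD uD qD = G qD)

/-- A source Darcy solution: zero normal trace, Darcy equations on the kernel of the
trace, and divergence constraint given by `G`. -/
def IsSourceDarcySolution
    (ND : VD →ₗ[ℝ] W)
    (aD : VD →ₗ[ℝ] VD →ₗ[ℝ] ℝ) (bD : VD →ₗ[ℝ] QD →ₗ[ℝ] ℝ)
    (G : QD →ₗ[ℝ] ℝ) (uf : VD) (pf : QD) : Prop :=
  ND uf = 0 ∧
  (∀ v : VD, ND v = 0 → aD uf v - bD v pf = 0) ∧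
  (∀ q : QD, bD uf q = G q)

/-- A flux Darcy solution for the interface flux `φ`. -/
def IsFluxDarcySolution
    (ND : VD →ₗ[ℝ] W)
    (aD : VD →ₗ[ℝ] VD →ₗ[ℝ] ℝ) (bD : VD →ₗ[ℝ] QD →ₗ[ℝ] ℝ)
    (φ : W) (u : VD) (p : QD) : Prop :=
  ND u = φ ∧
  (∀ v : VD, ND v = 0 → aD u v - bD v p = 0) ∧
  (∀ q : QD, bD u q = 0)

/-- Reduced formulation implies coupled formulation. -/
theorem reduced_implies_coupled
    (NS : VS →ₗ[ℝ] W) (ND : VD →ₗ[ℝ] W) (R : W →ₗ[ℝ] W)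
    (hRrange : ∀ w : W, R w ∈ LinearMap.range ND)
    (hRid : ∀ w ∈ LinearMap.range ND, R w = w)
    (hRorth : ∀ w : W, ∀ u ∈ LinearMap.range ND, ⟪w - R w, u⟫ = 0)
    (aS : VS →ₗ[ℝ] VS →ₗ[ℝ] ℝ) (aD : VD →ₗ[ℝ] VD →ₗ[ℝ] ℝ)
    (bS : VS →ₗ[ℝ] QS →ₗ[ℝ] ℝ) (bD : VD →ₗ[ℝ] QD →ₗ[ℝ] ℝ)
    (F : VS →ₗ[ℝ] ℝ) (G : QD →ₗ[ℝ] ℝ)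
    (uf : VD) (pf : QD) (hsrc : IsSourceDarcySolution ND aD bD G uf pf)
    (γ : W) (hγ : ∀ v : VD, ⟪γ, ND v⟫ = aD uf v - bD v pf)
    (uS : VS) (pS : QS)
    (uφ : VD) (pφ : QD)
    (hflux : IsFluxDarcySolution ND aD bD (R (NS uS)) uφ pφ)
    (t : W) (ht : ∀ v : VD, ⟪t, ND v⟫ = aD uφ v - bD v pφ)
    (hred1 : ∀ v : VS,
      aS uS v + ⟪t, R (NS v)⟫ - bS v pS = F v - ⟪γ, R (NS v)⟫)
    (hred2 : ∀ q : QS, bS uS q = 0) :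
    IsCoupledSolution NS ND R aS aD bS bD F G uS (uf + uφ) pS (pf + pφ) := by
  obtain ⟨hf0, -, hfG⟩ := hsrc
  obtain ⟨hφ, -, hφ0⟩ := hflux
  refine ⟨by rw [map_add, hf0, hφ, zero_add], fun vS vD hv => ?_, fun qS qD => ?_⟩
  · -- Since `ND vD = R (NS vS)`, the multiplier identities at `vD` turn the interface terms
    -- of the reduced equation into the Darcy residuals of the source and flux solutions.
    have h1 := hred1 vS
    rw [← hv, hγ, ht] at h1
    simp only [map_add, LinearMap.add_apply]
    linarith
  · simp only [map_add, LinearMap.add_apply, hred2, hfG, hφ0, zero_add, add_zero]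

end StokesDarcy
end

section
/- (Decomposition of the Darcy component of a coupled solution.) Assume the homogeneous Darcy problem has only the trivial solution: whenever (w, r) ∈ V_D × Q_D satisfies N_D w = 0, a_D(w, v) − b_D(v, r) = 0 for all v in the kernel of N_D, and b_D(w, q) = 0 for all q ∈ Q_D, then w = 0 and r = 0. Let ((u_S, u_D), (p_S, p_D)) solve the coupled problem, let (u^f, p^f) be a source Darcy solution, set φ := R(N_S u_S), and let (u^φ, p^φ) be a flux Darcy solution for φ. Then u_D = u^f + u^φ and p_D = p^f + p^φ. -/
/-!
Testing the coupled problem with `vS = 0` and a trace-free `vD`, and with `qS = 0`, shows that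
`(uD, pD)` satisfies the Darcy equations with source `G` and normal trace `R (NS uS)`. By linearity
`(uf + uφ, pf + pφ)` satisfies the same equations, so the difference of the two pairs solves the
homogeneous Darcy problem and vanishes by `huniq`.
-/

open RealInnerProductSpace

section StokesDarcy

variable {VS QS VD QD W : Type*}
  [NormedAddCommGroup VS] [InnerProductSpace ℝ VS] [FiniteDimensional ℝ VS]
  [NormedAddCommGroup QS] [InnerProductSpace ℝ QS] [FiniteDimensional ℝ QS]
  [NormedAddCommGroup VD] [InnerProductSpace ℝ VD] [FiniteDimensional ℝ VD]
  [NormedAddCommGroup QD] [InnerProductSpace ℝ QD] [FiniteDimensional ℝ QD]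
  [NormedAddCommGroup W] [InnerProductSpace ℝ W] [FiniteDimensional ℝ W]

/-- Decomposition of the Darcy component of a coupled solution: if the homogeneous
Darcy problem has only the trivial solution, then the Darcy part of any coupled
solution splits as the sum of the source Darcy solution and the flux Darcy solution
for `φ = R (NS uS)`. -/
theorem darcy_component_decomposition
    (NS : VS →ₗ[ℝ] W) (ND : VD →ₗ[ℝ] W) (R : W →ₗ[ℝ] W)
    (hRrange : ∀ w : W, R w ∈ LinearMap.range ND)
    (hRid : ∀ w ∈ LinearMap.range ND, R w = w)
    (hRorth : ∀ w : W, ∀ u ∈ LinearMap.range ND, ⟪w - R w, u⟫ = 0)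
    (aS : VS →ₗ[ℝ] VS →ₗ[ℝ] ℝ) (aD : VD →ₗ[ℝ] VD →ₗ[ℝ] ℝ)
    (bS : VS →ₗ[ℝ] QS →ₗ[ℝ] ℝ) (bD : VD →ₗ[ℝ] QD →ₗ[ℝ] ℝ)
    (F : VS →ₗ[ℝ] ℝ) (G : QD →ₗ[ℝ] ℝ)
    (huniq : ∀ (w : VD) (r : QD), ND w = 0 →
      (∀ v : VD, ND v = 0 → aD w v - bD v r = 0) →
      (∀ q : QD, bD w q = 0) → w = 0 ∧ r = 0)
    (uS : VS) (uD : VD) (pS : QS) (pD : QD)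
    (hcoupled : IsCoupledSolution NS ND R aS aD bS bD F G uS uD pS pD)
    (uf : VD) (pf : QD) (hsrc : IsSourceDarcySolution ND aD bD G uf pf)
    (uφ : VD) (pφ : QD)
    (hflux : IsFluxDarcySolution ND aD bD (R (NS uS)) uφ pφ) :
    uD = uf + uφ ∧ pD = pf + pφ := by
  obtain ⟨hc1, hc2, hc3⟩ := hcoupled
  obtain ⟨hs1, hs2, hs3⟩ := hsrc
  obtain ⟨hf1, hf2, hf3⟩ := hflux
  -- The difference solves the homogeneous Darcy problem.
  have key := huniq (uD - (uf + uφ)) (pD - (pf + pφ))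
    (by simp [hc1, hs1, hf1])
    (by
      intro v hv
      -- A trace-free `v` is an admissible Darcy test function when paired with `vS = 0`.
      have h1 := hc2 0 v (by simp [hv])
      have h2 := hs2 v hv
      have h3 := hf2 v hv
      simp only [map_zero, LinearMap.zero_apply] at h1
      simp only [map_sub, map_add, LinearMap.sub_apply, LinearMap.add_apply]
      linarith)
    (by
      intro q
      have h1 := hc3 0 q
      have h2 := hs3 q
      have h3 := hf3 q
      simp only [map_zero] at h1
      simp only [map_sub, map_add, LinearMap.sub_apply, LinearMap.add_apply]
      linarith)
  exact ⟨sub_eq_zero.mp key.1, sub_eq_zero.mp key.2⟩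

end StokesDarcy
end

section
/- (Coupled formulation implies reduced formulation.) Let ((u_S, u_D), (p_S, p_D)) solve the coupled problem. Let (u^f, p^f) be a source Darcy solution and γ ∈ W satisfy ⟨γ, N_D v⟩ = a_D(u^f, v) − b_D(v, p^f) for all v ∈ V_D; set φ := R(N_S u_S), let (u^φ, p^φ) be a flux Darcy solution for φ and t ∈ W satisfy ⟨t, N_D v⟩ = a_D(u^φ, v) − b_D(v, p^φ) for all v ∈ V_D; and suppose u_D = u^f + u^φ and p_D = p^f + p^φ. Then (u_S, p_S) satisfies the reduced problem: a_S(u_S, v) + ⟨t, R(N_S v)⟩ − b_S(v, p_S) = F(v) − ⟨γ, R(N_S v)⟩ for all v ∈ V_S, and b_S(u_S, q) = 0 for all q ∈ Q_S. -/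
open RealInnerProductSpace

section StokesDarcy

variable {VS QS VD QD W : Type*}
  [NormedAddCommGroup VS] [InnerProductSpace ℝ VS] [FiniteDimensional ℝ VS]
  [NormedAddCommGroup QS] [InnerProductSpace ℝ QS] [FiniteDimensional ℝ QS]
  [NormedAddCommGroup VD] [InnerProductSpace ℝ VD] [FiniteDimensional ℝ VD]
  [NormedAddCommGroup QD] [InnerProductSpace ℝ QD] [FiniteDimensional ℝ QD]
  [NormedAddCommGroup W] [InnerProductSpace ℝ W] [FiniteDimensional ℝ W]

/-- Coupled formulation implies reduced formulation. -/
theorem coupled_implies_reduced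
    (NS : VS →ₗ[ℝ] W) (ND : VD →ₗ[ℝ] W) (R : W →ₗ[ℝ] W)
    (hRrange : ∀ w : W, R w ∈ LinearMap.range ND)
    (hRid : ∀ w ∈ LinearMap.range ND, R w = w)
    (hRorth : ∀ w : W, ∀ u ∈ LinearMap.range ND, ⟪w - R w, u⟫ = 0)
    (aS : VS →ₗ[ℝ] VS →ₗ[ℝ] ℝ) (aD : VD →ₗ[ℝ] VD →ₗ[ℝ] ℝ)
    (bS : VS →ₗ[ℝ] QS →ₗ[ℝ] ℝ) (bD : VD →ₗ[ℝ] QD →ₗ[ℝ] ℝ)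
    (F : VS →ₗ[ℝ] ℝ) (G : QD →ₗ[ℝ] ℝ)
    (uS : VS) (uD : VD) (pS : QS) (pD : QD)
    (hcoupled : IsCoupledSolution NS ND R aS aD bS bD F G uS uD pS pD)
    (uf : VD) (pf : QD) (hsrc : IsSourceDarcySolution ND aD bD G uf pf)
    (γ : W) (hγ : ∀ v : VD, ⟪γ, ND v⟫ = aD uf v - bD v pf)
    (uφ : VD) (pφ : QD)
    (hflux : IsFluxDarcySolution ND aD bD (R (NS uS)) uφ pφ)
    (t : W) (ht : ∀ v : VD, ⟪t, ND v⟫ = aD uφ v - bD v pφ)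
    (hdecu : uD = uf + uφ) (hdecp : pD = pf + pφ) :
    (∀ v : VS,
      aS uS v + ⟪t, R (NS v)⟫ - bS v pS = F v - ⟪γ, R (NS v)⟫) ∧
    (∀ q : QS, bS uS q = 0) := by
  obtain ⟨-, hmom, hdiv⟩ := hcoupled
  refine ⟨fun v => ?_, fun q => by simpa using hdiv q 0⟩
  -- A Darcy lifting of the projected trace makes `(v, vD)` an admissible coupled test pair.
  obtain ⟨vD, hvD⟩ := hRrange (NS v)
  have hm := hmom v vD hvD
  rw [← hvD, ht, hγ]
  simp only [hdecu, hdecp, map_add, LinearMap.add_apply] at hm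
  linarith

end StokesDarcy
end
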